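/- Let G be a connected graph on n vertices with a JL-coloring φ (surjective, rainbow-cycle-free coloring with n-1 colors). Then (|E(G)| - (n-2)) ≤ |R(G,φ)| ≤ (|E(G)|/(n-1))^(n-1), where R(G,φ) is the set of rainbow spanning trees. -/

import Mathlib

/-- `T` is the edge set of a spanning tree of `G`: its edges lie in `G`, and the graph
formed by these edges is connected (hence spanning) and acyclic. -/
def IsSpanningTreeEdges {V : Type*} (G : SimpleGraph V) (T : Finset (Sym2 V)) : Prop :=
  ↑T ⊆ G.edgeSet ∧ (SimpleGraph.fromEdgeSet (↑T : Set (Sym2 V))).Connected ∧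
    (SimpleGraph.fromEdgeSet (↑T : Set (Sym2 V))).IsAcyclic

/-- An edge set is rainbow under a coloring `φ` if all its edges receive distinct colors. -/
def IsRainbow {V : Type*} {k : ℕ} (φ : Sym2 V → Fin k) (T : Finset (Sym2 V)) : Prop :=
  Set.InjOn φ ↑T

/-- `G` has a rainbow cycle under `φ`: a cycle whose edges receive pairwise distinct colors. -/
def HasRainbowCycle {V : Type*} {k : ℕ} (G : SimpleGraph V) (φ : Sym2 V → Fin k) : Prop :=
  ∃ (v : V) (c : G.Walk v v), c.IsCycle ∧ Set.InjOn φ {e | e ∈ c.edges}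

/-- `φ` is a JL-coloring of `G`: every one of the `k` colors appears on some edge of `G`
(surjectivity onto the colors) and there is no rainbow cycle. -/
def IsJLColoring {V : Type*} {k : ℕ} (G : SimpleGraph V) (φ : Sym2 V → Fin k) : Prop :=
  (∀ c : Fin k, ∃ e ∈ G.edgeSet, φ e = c) ∧ ¬ HasRainbowCycle G φ

/-- The number of rainbow spanning trees of `G` under the edge coloring `φ`. -/
noncomputable def numRST {V : Type*} {k : ℕ} (G : SimpleGraph V) (φ : Sym2 V → Fin k) : ℕ :=
  Nat.card {T : Finset (Sym2 V) // IsSpanningTreeEdges G T ∧ IsRainbow φ T}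

/-!
A spanning tree on `n` vertices has `n - 1` edges, so with `n - 1` colors a rainbow one uses every
color exactly once: it is a transversal of the color classes. Conversely a transversal is rainbow,
hence acyclic when there is no rainbow cycle, and having `n - 1` edges it is then a spanning tree.
Therefore `|R(G, φ)|` is the product of the sizes of the color classes. These sizes add up to
`|E(G)|`; the upper bound is AM-GM, and the lower bound is `1 + ∑ (aᵢ - 1) ≤ ∏ aᵢ` for `aᵢ ≥ 1`.
-/

section Inequalities

open Finset

variable {ι : Type*}

theorem one_add_sum_le_prod_one_add {R : Type*} [CommSemiring R] [PartialOrder R]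
    [IsOrderedRing R] (s : Finset ι) {x : ι → R} (hx : ∀ i ∈ s, 0 ≤ x i) :
    1 + ∑ i ∈ s, x i ≤ ∏ i ∈ s, (1 + x i) := by
  induction s using Finset.cons_induction with
  | empty => simp
  | cons i s hi ih =>
    obtain ⟨hxi, hxs⟩ := (forall_mem_cons hi _).1 hx
    have hsum : 0 ≤ ∑ j ∈ s, x j := sum_nonneg hxs
    rw [sum_cons, prod_cons]
    calc 1 + (x i + ∑ j ∈ s, x j)
        ≤ 1 + (x i + ∑ j ∈ s, x j) + x i * ∑ j ∈ s, x j :=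
          le_add_of_nonneg_right (mul_nonneg hxi hsum)
      _ = (1 + x i) * (1 + ∑ j ∈ s, x j) := by ring
      _ ≤ (1 + x i) * ∏ j ∈ s, (1 + x j) :=
          mul_le_mul_of_nonneg_left (ih hxs) (add_nonneg zero_le_one hxi)

theorem prod_le_arith_mean_pow_card (s : Finset ι) {x : ι → ℝ} (hx : ∀ i ∈ s, 0 ≤ x i) :
    ∏ i ∈ s, x i ≤ ((∑ i ∈ s, x i) / #s) ^ #s := by
  obtain rfl | hs := s.eq_empty_or_nonempty
  · simp
  have hprod : 0 ≤ ∏ i ∈ s, x i := prod_nonneg hx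
  have amgm : (∏ i ∈ s, x i) ^ (#s : ℝ)⁻¹ ≤ (∑ i ∈ s, x i) / #s := by
    simpa using Real.geom_mean_le_arith_mean s 1 x (fun _ _ => zero_le_one) (by simpa) hx
  calc ∏ i ∈ s, x i = ((∏ i ∈ s, x i) ^ (#s : ℝ)⁻¹) ^ #s :=
        (Real.rpow_inv_natCast_pow hprod hs.card_ne_zero).symm
    _ ≤ ((∑ i ∈ s, x i) / #s) ^ #s := by gcongr

end Inequalities

section Transversals

open Finset

variable {α ι : Type*} {f : α → ι}

theorem bijOn_range_of_leftInverse {g : ι → α} (hg : Function.LeftInverse f g) :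
    Set.BijOn f (Set.range g) Set.univ := by
  refine ⟨Set.mapsTo_univ _ _, ?_, fun i _ => ⟨g i, Set.mem_range_self i, hg i⟩⟩
  rintro _ ⟨i, rfl⟩ _ ⟨j, rfl⟩ hij
  rw [hg i, hg j] at hij
  rw [hij]

theorem eq_of_leftInverse_of_range_subset {g h : ι → α} (hg : Function.LeftInverse f g)
    (hh : Function.LeftInverse f h) (hgh : Set.range g ⊆ Set.range h) : g = h := by
  funext i
  obtain ⟨j, hj⟩ := hgh (Set.mem_range_self i)
  have hji : j = i := by rw [← hh j, hj, hg i]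
  rw [← hj, hji]

theorem exists_leftInverse_range_eq {t : Set α} (ht : Set.BijOn f t Set.univ) :
    ∃ g : ι → α, Function.LeftInverse f g ∧ Set.range g = t := by
  choose g hgt hfg using fun i => ht.surjOn (Set.mem_univ i)
  refine ⟨g, hfg, (Set.range_subset_iff.2 hgt).antisymm fun a ha => ⟨f a, ?_⟩⟩
  exact ht.injOn (hgt _) ha (hfg _)

theorem card_bijOn_univ_eq_prod_card_fiber [Fintype ι] [DecidableEq ι] (s : Finset α) (f : α → ι) :
    Nat.card {t : Finset α // t ⊆ s ∧ Set.BijOn f t Set.univ} = ∏ i, #{a ∈ s | f a = i} := by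
  classical
  have leftInverse_coe (g : ∀ i, ({a ∈ s | f a = i} : Finset α)) :
      Function.LeftInverse f (fun i => (g i : α)) := fun i => (mem_filter.1 (g i).2).2
  let toTransversal (g : ∀ i, ({a ∈ s | f a = i} : Finset α)) :
      {t : Finset α // t ⊆ s ∧ Set.BijOn f t Set.univ} :=
    ⟨univ.image fun i => (g i : α),
      image_subset_iff.2 fun i _ => (mem_filter.1 (g i).2).1,
      by simpa using bijOn_range_of_leftInverse (leftInverse_coe g)⟩
  have coe_toTransversal (g) :
      ((toTransversal g : Finset α) : Set α) = Set.range fun i => (g i : α) := by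
    simp [toTransversal]
  have toTransversal_bijective : Function.Bijective toTransversal := by
    constructor
    · intro g h hgh
      have hsub : Set.range (fun i => (g i : α)) ⊆ Set.range fun i => (h i : α) := by
        rw [← coe_toTransversal, ← coe_toTransversal, hgh]
      funext i
      exact Subtype.ext <|
        congrFun (eq_of_leftInverse_of_range_subset (leftInverse_coe g) (leftInverse_coe h) hsub) i
    · rintro ⟨t, hts, ht⟩
      obtain ⟨g, hfg, hgt⟩ := exists_leftInverse_range_eq ht
      have hgs (i : ι) : g i ∈ s := hts (mem_coe.1 (hgt ▸ Set.mem_range_self i))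
      refine ⟨fun i => ⟨g i, mem_filter.2 ⟨hgs i, hfg i⟩⟩, Subtype.ext (coe_injective ?_)⟩
      rw [coe_toTransversal, hgt]
  rw [← Nat.card_eq_of_bijective toTransversal toTransversal_bijective, Nat.card_pi]
  simp only [Nat.card_eq_fintype_card, Fintype.card_coe]

end Transversals

section GraphEdges

open SimpleGraph

variable {V : Type*} {G : SimpleGraph V}

theorem edgeSet_fromEdgeSet_of_subset {s : Set (Sym2 V)} (hs : s ⊆ G.edgeSet) :
    (fromEdgeSet s).edgeSet = s := by
  have hdiag : Disjoint G.edgeSet Sym2.diagSet := ((edgeSet_eq_iff G _).1 rfl).2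
  rw [edgeSet_fromEdgeSet, (hdiag.mono_left hs).sdiff_eq_left]

theorem card_edgeSet_fromEdgeSet_of_subset {T : Finset (Sym2 V)} (hT : ↑T ⊆ G.edgeSet) :
    Nat.card (fromEdgeSet (T : Set (Sym2 V))).edgeSet = T.card := by
  rw [edgeSet_fromEdgeSet_of_subset hT, Nat.card_coe_set_eq, Set.ncard_coe_finset]

theorem isTree_of_isAcyclic_of_card_edgeSet_add_one [Finite V] (hG : G.IsAcyclic)
    (hcard : Nat.card G.edgeSet + 1 = Nat.card V) : G.IsTree := by
  have : Nonempty V := (Nat.card_pos_iff.1 (hcard ▸ Nat.succ_pos _)).1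
  obtain ⟨T, hGT, -, hT⟩ := connected_top.exists_isTree_le_of_le_of_isAcyclic le_top hG
  have hT_card := (isTree_iff_connected_and_card.1 hT).2
  have hle : T.edgeSet.ncard ≤ G.edgeSet.ncard := by
    rw [← Nat.card_coe_set_eq, ← Nat.card_coe_set_eq]
    omega
  rwa [edgeSet_injective (Set.eq_of_subset_of_ncard_le (edgeSet_mono hGT) hle)]

end GraphEdges

section ColorClasses

open Finset SimpleGraph

variable {V : Type*} {G : SimpleGraph V} [Fintype G.edgeSet] {k : ℕ} {φ : Sym2 V → Fin k}

/-- The color class of `c`: the set of edges of `G`, rather than of all pairs in `Sym2 V`, that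
receive the color `c`. These are the sets `C_c` of the product formula. -/
def colorClass (G : SimpleGraph V) [Fintype G.edgeSet] (φ : Sym2 V → Fin k) (c : Fin k) :
    Finset (Sym2 V) :=
  {e ∈ G.edgeFinset | φ e = c}

theorem sum_card_colorClass : ∑ c, #(colorClass G φ c) = #G.edgeFinset :=
  (card_eq_sum_card_fiberwise fun _ _ => mem_univ _).symm

theorem IsJLColoring.one_le_card_colorClass (hφ : IsJLColoring G φ) (c : Fin k) :
    1 ≤ #(colorClass G φ c) := by
  obtain ⟨e, he, hec⟩ := hφ.1 c
  exact card_pos.2 ⟨e, mem_filter.2 ⟨mem_edgeFinset.2 he, hec⟩⟩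

end ColorClasses

section RainbowTrees

open Finset SimpleGraph

variable {V : Type*} {G : SimpleGraph V} {k : ℕ} {φ : Sym2 V → Fin k} {T : Finset (Sym2 V)}

theorem isAcyclic_fromEdgeSet_of_injOn (hφ : ¬HasRainbowCycle G φ) {s : Set (Sym2 V)}
    (hs : s ⊆ G.edgeSet) (hinj : Set.InjOn φ s) : (fromEdgeSet s).IsAcyclic := by
  intro v c hc
  have hle : fromEdgeSet s ≤ G := (fromEdgeSet_le G).2 (Set.sdiff_subset.trans hs)
  have hedges : {e | e ∈ (c.mapLe hle).edges} ⊆ s := fun e he => by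
    rw [Set.mem_ofPred_eq, Walk.edges_mapLe_eq_edges] at he
    exact edgeSet_fromEdgeSet_of_subset hs ▸ c.edges_subset_edgeSet he
  exact hφ ⟨v, c.mapLe hle, hc.mapLe hle, hinj.mono hedges⟩

variable [Fintype V]

theorem IsSpanningTreeEdges.card_add_one (hT : IsSpanningTreeEdges G T) :
    #T + 1 = Fintype.card V := by
  obtain ⟨hTG, hconn, hacyc⟩ := hT
  rw [← card_edgeSet_fromEdgeSet_of_subset hTG, ← Nat.card_eq_fintype_card]
  exact (isTree_iff_connected_and_card.1 ⟨hconn, hacyc⟩).2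

theorem IsRainbow.isSpanningTreeEdges (hT : IsRainbow φ T) (hφ : ¬HasRainbowCycle G φ)
    (hTG : ↑T ⊆ G.edgeSet) (hcard : #T + 1 = Fintype.card V) : IsSpanningTreeEdges G T := by
  have hacyc := isAcyclic_fromEdgeSet_of_injOn hφ hTG hT
  refine ⟨hTG, (isTree_of_isAcyclic_of_card_edgeSet_add_one hacyc ?_).connected, hacyc⟩
  rw [card_edgeSet_fromEdgeSet_of_subset hTG, hcard, Nat.card_eq_fintype_card]

theorem isSpanningTreeEdges_and_isRainbow_iff (hk : k + 1 = Fintype.card V)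
    (hφ : ¬HasRainbowCycle G φ) :
    IsSpanningTreeEdges G T ∧ IsRainbow φ T ↔ ↑T ⊆ G.edgeSet ∧ Set.BijOn φ T Set.univ := by
  constructor
  · rintro ⟨hT, hrainbow⟩
    have hcard : #(univ : Finset (Fin k)) ≤ #T := by
      have := hT.card_add_one
      rw [card_fin]
      omega
    have hsurj : Set.SurjOn φ T (univ : Finset (Fin k)) :=
      surjOn_of_injOn_of_card_le φ (fun _ _ => mem_univ _) hrainbow hcard
    exact ⟨hT.1, Set.mapsTo_univ _ _, hrainbow, by rwa [coe_univ] at hsurj⟩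
  · rintro ⟨hTG, hbij⟩
    have hcard : #T = k := by
      simpa [Set.ncard_univ] using hbij.ncard_eq
    have hrainbow : IsRainbow φ T := hbij.injOn
    exact ⟨hrainbow.isSpanningTreeEdges hφ hTG (by rw [hcard, hk]), hrainbow⟩

variable [Fintype G.edgeSet]

theorem numRST_eq_prod_card_colorClass (hk : k + 1 = Fintype.card V)
    (hφ : ¬HasRainbowCycle G φ) : numRST G φ = ∏ c, #(colorClass G φ c) := by
  simp only [numRST, isSpanningTreeEdges_and_isRainbow_iff hk hφ, ← coe_edgeFinset, coe_subset]
  exact card_bijOn_univ_eq_prod_card_fiber G.edgeFinset φ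

theorem card_edgeFinset_sub_le_numRST (hk : k + 1 = Fintype.card V) (hφ : IsJLColoring G φ) :
    (#G.edgeFinset : ℝ) - (k - 1) ≤ numRST G φ := by
  have hclass (c : Fin k) : (0 : ℝ) ≤ #(colorClass G φ c) - 1 :=
    sub_nonneg.2 (mod_cast hφ.one_le_card_colorClass c)
  calc (#G.edgeFinset : ℝ) - (k - 1)
      = 1 + (∑ c, (#(colorClass G φ c) : ℝ) - k) := by
        rw [← sum_card_colorClass (φ := φ), Nat.cast_sum]; ring
    _ = 1 + ∑ c, ((#(colorClass G φ c) : ℝ) - 1) := by simp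
    _ ≤ ∏ c, (1 + ((#(colorClass G φ c) : ℝ) - 1)) :=
        one_add_sum_le_prod_one_add univ fun c _ => hclass c
    _ = numRST G φ := by simp [numRST_eq_prod_card_colorClass hk hφ.2]

theorem numRST_le_card_edgeFinset_div_pow (hk : k + 1 = Fintype.card V)
    (hφ : ¬HasRainbowCycle G φ) : (numRST G φ : ℝ) ≤ (#G.edgeFinset / k) ^ k := by
  calc (numRST G φ : ℝ) = ∏ c, (#(colorClass G φ c) : ℝ) := by
        rw [numRST_eq_prod_card_colorClass hk hφ, Nat.cast_prod]
    _ ≤ ((∑ c, (#(colorClass G φ c) : ℝ)) / #(univ : Finset (Fin k))) ^ #(univ : Finset (Fin k)) :=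
        prod_le_arith_mean_pow_card univ fun _ _ => Nat.cast_nonneg _
    _ = (#G.edgeFinset / k) ^ k := by rw [← Nat.cast_sum, sum_card_colorClass, card_fin]

end RainbowTrees

/-- For a JL-coloring `φ` of a connected graph `G` on `n` vertices,
`|E(G)| - (n - 2) ≤ |R(G,φ)| ≤ (|E(G)|/(n-1))^(n-1)`. -/
theorem stmt_14 {V : Type*} [Fintype V] [DecidableEq V] (G : SimpleGraph V)
    [DecidableRel G.Adj] (hG : G.Connected)
    (φ : Sym2 V → Fin (Fintype.card V - 1)) (hφ : IsJLColoring G φ) :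
    (G.edgeFinset.card : ℝ) - ((Fintype.card V : ℝ) - 2) ≤ (numRST G φ : ℝ) ∧
      (numRST G φ : ℝ) ≤
        ((G.edgeFinset.card : ℝ) / ((Fintype.card V : ℝ) - 1)) ^ (Fintype.card V - 1) := by
  have := hG.nonempty
  have hk : Fintype.card V - 1 + 1 = Fintype.card V := Nat.sub_add_cancel Fintype.card_pos
  have hk_cast : ((Fintype.card V - 1 : ℕ) : ℝ) = Fintype.card V - 1 := by rw [← hk]; simp
  have hlower := card_edgeFinset_sub_le_numRST hk hφ
  have hupper := numRST_le_card_edgeFinset_div_pow hk hφ.2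
  rw [hk_cast] at hlower hupper
  exact ⟨by linarith, hupper⟩
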